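/- arXiv:2401.07153 — 2 statements merged into one kernel-verified Lean document; each statement's English description precedes it below -/
import Mathlib

section
/- Let Υ_II be the 12×8 0/1 matrix defined by Υ_II[(n−1)·4+m, ℓ] = 1 if d_tx[n] + d_rx[m] = ℓ−1 and 0 otherwise, where (d_tx[1],d_tx[2],d_tx[3]) = (0,1,2) and (d_rx[1],d_rx[2],d_rx[3],d_rx[4]) = (0,1,3,5). Let S₀ ∈ ℂ^{2×3} be the matrix with rows (1,0,1) and (0,1,0). Then rank(S₀) = 2 and the 8×8 matrix W_II = (S₀ ⊗ I_4) Υ_II has rank 8 (equivalently, W_II is invertible). -/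
open Matrix Kronecker

/-- Transmit positions of Array II: {0,1,2}. -/
def dtx : Fin 3 → ℕ := ![0, 1, 2]

/-- Receive positions of Array II: {0,1,3,5}. -/
def drxII : Fin 4 → ℕ := ![0, 1, 3, 5]

/-- Redundancy pattern of Array II: row (n, m), column ℓ is 1 iff dtx n + drxII m = ℓ. -/
noncomputable def UpsilonII : Matrix (Fin 3 × Fin 4) (Fin 8) ℂ :=
  fun p ℓ => if dtx p.1 + drxII p.2 = (ℓ : ℕ) then 1 else 0

/-- The rank-2 waveform matrix with rows (1,0,1) and (0,1,0). -/
noncomputable def S₀ : Matrix (Fin 2) (Fin 3) ℂ := !![1, 0, 1; 0, 1, 0]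

/-!
A vector `v` on the virtual sensors `0, …, 7` in the kernel of `(S₀ ⊗ₖ 1) * UpsilonII` satisfies
`v (r + 1) = 0` and `v r + v (r + 2) = 0` for every receive position `r ∈ {0, 1, 3, 5}`. The first
family kills the sensors `1, 2, 4, 6`; the second links `0 – 2`, `1 – 3`, `3 – 5` and `5 – 7`, so
the zeros propagate from `2` to `0` and from `1` to `3`, `5` and `7`. Only the coefficients `0`
and `1` occur, so the argument works over every commutative ring.
-/

/-- The redundancy pattern of the array with transmit positions `dtx` and receive positions `drx`,
with entries in `R`, for virtual sensors at `0, …, L - 1`. A pair whose position sum is at least `L`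
gets a zero row. -/
def redundancyPattern {M N : Type*} (R : Type*) [Zero R] [One R] (dtx : N → ℕ) (drx : M → ℕ)
    (L : ℕ) : Matrix (N × M) (Fin L) R :=
  fun p ℓ => if dtx p.1 + drx p.2 = (ℓ : ℕ) then 1 else 0

/-- The waveform matrix `S₀` with entries in an arbitrary `R`. -/
def rankTwoWaveform (R : Type*) [Zero R] [One R] : Matrix (Fin 2) (Fin 3) R :=
  !![1, 0, 1; 0, 1, 0]

section MulVec

variable {K M N R : Type*}

theorem redundancyPattern_mulVec [NonAssocSemiring R] {dtx : N → ℕ} {drx : M → ℕ} {L : ℕ}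
    (hL : ∀ n m, dtx n + drx m < L) (v : Fin L → R) (n : N) (m : M) :
    (redundancyPattern R dtx drx L *ᵥ v) (n, m) = v ⟨dtx n + drx m, hL n m⟩ := by
  have hrow (ℓ : Fin L) : dtx n + drx m = (ℓ : ℕ) ↔ ⟨dtx n + drx m, hL n m⟩ = ℓ := by
    rw [Fin.ext_iff]
  simp [redundancyPattern, mulVec, dotProduct, hrow]

theorem kronecker_one_mulVec [NonAssocSemiring R] [Fintype M] [Fintype N] [DecidableEq M]
    (S : Matrix K N R) (u : N × M → R) (k : K) (m : M) :
    ((S ⊗ₖ (1 : Matrix M M R)) *ᵥ u) (k, m) = ∑ n, S k n * u (n, m) := by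
  simp [mulVec, dotProduct, Fintype.sum_prod_type, one_apply]

theorem kronecker_one_mul_redundancyPattern_mulVec [Semiring R] [Fintype M] [Fintype N]
    [DecidableEq M] {dtx : N → ℕ} {drx : M → ℕ} {L : ℕ} (hL : ∀ n m, dtx n + drx m < L)
    (S : Matrix K N R) (v : Fin L → R) (k : K) (m : M) :
    (((S ⊗ₖ (1 : Matrix M M R)) * redundancyPattern R dtx drx L) *ᵥ v) (k, m) =
      ∑ n, S k n * v ⟨dtx n + drx m, hL n m⟩ := by
  simp only [← mulVec_mulVec, kronecker_one_mulVec, redundancyPattern_mulVec hL]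

end MulVec

section Rank

variable {R : Type*} [CommRing R]

theorem rank_eq_card_of_mulVec_eq_zero [Nontrivial R] {m n : Type*} [Fintype n]
    {A : Matrix m n R} (hA : ∀ v, A *ᵥ v = 0 → v = 0) : A.rank = Fintype.card n := by
  have hinj : Function.Injective A.mulVecLin := (injective_iff_map_eq_zero A.mulVecLin).mpr hA
  rw [rank, LinearMap.finrank_range_of_inj hinj, Module.finrank_pi]

theorem rank_rankTwoWaveform [Nontrivial R] : (rankTwoWaveform R).rank = 2 := by
  have hsub : (rankTwoWaveform R).submatrix id ![0, 1] = 1 := by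
    ext i j
    fin_cases i <;> fin_cases j <;> rfl
  refine le_antisymm (rank_le_height _) ?_
  calc
    2 = ((rankTwoWaveform R).submatrix id ![0, 1]).rank := by rw [hsub, rank_one, Fintype.card_fin]
    _ ≤ (rankTwoWaveform R).rank := rank_submatrix_le _ _ _

theorem dtx_add_drxII_lt (n : Fin 3) (m : Fin 4) : dtx n + drxII m < 8 := by
  revert n m
  decide

theorem eq_zero_of_kronecker_mul_redundancyPattern_mulVec_eq_zero {v : Fin 8 → R}
    (hv : ((rankTwoWaveform R ⊗ₖ (1 : Matrix (Fin 4) (Fin 4) R)) *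
      redundancyPattern R dtx drxII 8) *ᵥ v = 0) : v = 0 := by
  have hsum (k : Fin 2) (m : Fin 4) :
      ∑ n, rankTwoWaveform R k n * v ⟨dtx n + drxII m, dtx_add_drxII_lt n m⟩ = 0 := by
    rw [← kronecker_one_mul_redundancyPattern_mulVec, hv, Pi.zero_apply]
  have hpair (m : Fin 4) :
      v ⟨dtx 0 + drxII m, dtx_add_drxII_lt 0 m⟩ +
        v ⟨dtx 2 + drxII m, dtx_add_drxII_lt 2 m⟩ = 0 := by
    simpa [rankTwoWaveform, Fin.sum_univ_three] using hsum 0 m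
  have hsingle (m : Fin 4) : v ⟨dtx 1 + drxII m, dtx_add_drxII_lt 1 m⟩ = 0 := by
    simpa [rankTwoWaveform, Fin.sum_univ_three] using hsum 1 m
  have h1 : v 1 = 0 := hsingle 0
  have h2 : v 2 = 0 := hsingle 1
  have h4 : v 4 = 0 := hsingle 2
  have h6 : v 6 = 0 := hsingle 3
  have h0 : v 0 = 0 := by
    have h02 : v 0 + v 2 = 0 := hpair 0
    rwa [h2, add_zero] at h02
  have h3 : v 3 = 0 := by
    have h13 : v 1 + v 3 = 0 := hpair 1
    rwa [h1, zero_add] at h13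
  have h5 : v 5 = 0 := by
    have h35 : v 3 + v 5 = 0 := hpair 2
    rwa [h3, zero_add] at h35
  have h7 : v 7 = 0 := by
    have h57 : v 5 + v 7 = 0 := hpair 3
    rwa [h5, zero_add] at h57
  ext ℓ
  fin_cases ℓ <;> assumption

end Rank

theorem stmt8_general (R : Type*) [CommRing R] [Nontrivial R] :
    (rankTwoWaveform R).rank = 2 ∧
      ((rankTwoWaveform R ⊗ₖ (1 : Matrix (Fin 4) (Fin 4) R)) *
        redundancyPattern R dtx drxII 8).rank = 8 := by
  refine ⟨rank_rankTwoWaveform, ?_⟩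
  rw [rank_eq_card_of_mulVec_eq_zero fun _ =>
    eq_zero_of_kronecker_mul_redundancyPattern_mulVec_eq_zero, Fintype.card_fin]

theorem stmt8 :
    S₀.rank = 2 ∧ ((S₀ ⊗ₖ (1 : Matrix (Fin 4) (Fin 4) ℂ)) * UpsilonII).rank = 8 := by
  exact stmt8_general ℂ
end

section
/- Let Υ_II be the 12×8 0/1 matrix defined by Υ_II[(n−1)·4+m, ℓ] = 1 if d_tx[n] + d_rx[m] = ℓ−1 and 0 otherwise, where (d_tx[1],d_tx[2],d_tx[3]) = (0,1,2) and (d_rx[1],d_rx[2],d_rx[3],d_rx[4]) = (0,1,3,5), and let S₀ ∈ ℂ^{2×3} have rows (1,0,1) and (0,1,0). Let z_1, …, z_V be pairwise distinct complex numbers and let A ∈ ℂ^{8×V} have entries A[ℓ,i] = z_i^(ℓ−1). Then for all vectors x, z ∈ ℂ^V each having at most 4 nonzero entries, (S₀ ⊗ I_4) Υ_II A x = (S₀ ⊗ I_4) Υ_II A z implies x = z. -/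
open Matrix Kronecker

/-!
The argument rests on the Kruskal rank, the largest `r` such that any `r` columns are linearly
independent: if it is at least `a + b`, vectors with at most `a` and `b` nonzero entries are
separated, since only the columns in the union of their supports matter. The manifold matrix is
Vandermonde in distinct nodes, so any `8` of its columns are independent. Multiplying it by
`(S₀ ⊗ I₄) Υ_II` loses nothing because that matrix is injective: its second block row reads off
the virtual sensors `1, 2, 4, 6`, and the first reads off the sums over the pairs `(0, 2)`,
`(1, 3)`, `(3, 5)`, `(5, 7)`, which then yield the sensors `0, 3, 5, 7` in turn.
-/

section KruskalRank

variable {l m n ι R : Type*}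

/-- `LeKruskalRank r M` says that `r` is at most the Kruskal rank of `M`: the columns of `M` indexed
by any set of at most `r` indices are linearly independent. The bound is a predicate, rather than
an inequality on a numerical rank, so that it makes sense for any `r`, also when `M` has fewer than
`r` columns. -/
def LeKruskalRank [Semiring R] (r : ℕ) (M : Matrix m n R) : Prop :=
  ∀ s : Finset n, s.card ≤ r → LinearIndepOn R M.col s

namespace LeKruskalRank

theorem mul_of_mulVec_injective [CommSemiring R] [Fintype m] {r : ℕ} {M : Matrix m n R}
    (hM : LeKruskalRank r M) {L : Matrix l m R} (hL : Function.Injective L.mulVec) :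
    LeKruskalRank r (L * M) :=
  fun s hs => (hM s hs).map_injOn L.mulVecLin hL.injOn

theorem eq_of_mulVec_eq [CommSemiring R] [DecidableEq R] [Fintype n] {r : ℕ} {M : Matrix m n R}
    (hM : LeKruskalRank r M) {x y : n → R}
    (hxy : (Finset.univ.filter fun i => x i ≠ 0).card +
      (Finset.univ.filter fun i => y i ≠ 0).card ≤ r)
    (h : M *ᵥ x = M *ᵥ y) : x = y := by
  classical
  set s := (Finset.univ.filter fun i => x i ≠ 0) ∪ Finset.univ.filter fun i => y i ≠ 0 with hs
  have eq_zero_off_s {i : n} (hi : i ∉ s) : x i = 0 ∧ y i = 0 := by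
    simpa [hs] using hi
  have mulVec_eq_sum_cols {w : n → R} (hw : ∀ i ∉ s, w i = 0) :
      M *ᵥ w = ∑ i ∈ s, w i • M.col i := by
    rw [mulVec_eq_sum]
    refine (Finset.sum_subset s.subset_univ fun i _ hi => ?_).symm.trans
      (Finset.sum_congr rfl fun i _ => op_smul_eq_smul _ _)
    rw [hw i hi, MulOpposite.op_zero, zero_smul]
  have eq_on_s : ∀ i ∈ s, x i = y i := by
    refine linearIndepOn_finset_iffₛ.mp (hM s ((Finset.card_union_le _ _).trans hxy)) x y ?_
    rw [← mulVec_eq_sum_cols fun i hi => (eq_zero_off_s hi).1,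
      ← mulVec_eq_sum_cols fun i hi => (eq_zero_off_s hi).2, h]
  ext i
  by_cases hi : i ∈ s
  · exact eq_on_s i hi
  · rw [(eq_zero_off_s hi).1, (eq_zero_off_s hi).2]

end LeKruskalRank

theorem leKruskalRank_transpose_rectVandermonde [CommRing R] [IsDomain R] {z : ι → R}
    (hz : Function.Injective z) (r : ℕ) : LeKruskalRank r (rectVandermonde z 1 r)ᵀ := by
  intro s hs
  let e := s.equivFin
  have vandermonde_rows : LinearIndependent R (vandermonde fun k => z (e.symm k)).row :=
    linearIndependent_rows_of_det_ne_zero <| det_vandermonde_ne_zero_iff.mpr <|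
      hz.comp (Subtype.val_injective.comp e.symm.injective)
  let firstRows : (Fin r → R) →ₗ[R] Fin s.card → R := LinearMap.funLeft R R (Fin.castLE hs)
  refine LinearIndependent.of_comp firstRows ?_
  rw [← linearIndependent_equiv e.symm]
  convert vandermonde_rows using 1
  ext i k
  simp [firstRows, rectVandermonde_apply]

end KruskalRank

section ArrayII

theorem kronecker_one_mulVec_apply {l m n R : Type*} [NonAssocSemiring R] [Fintype m] [Fintype n]
    [DecidableEq n] (M : Matrix l m R) (v : m × n → R) (i : l) (j : n) :
    ((M ⊗ₖ (1 : Matrix n n R)) *ᵥ v) (i, j) = ∑ k, M i k * v (k, j) := by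
  simp [mulVec, dotProduct, Fintype.sum_prod_type, one_apply]

theorem UpsilonII_mulVec_apply (u : Fin 8 → ℂ) {n : Fin 3} {m : Fin 4} {ℓ : Fin 8}
    (hℓ : dtx n + drxII m = ℓ) : (UpsilonII *ᵥ u) (n, m) = u ℓ := by
  simp [UpsilonII, mulVec, dotProduct, hℓ, Fin.val_inj]

/-- The matrix `(S₀ ⊗ I₄) Υ_II` of Array II with waveform `S₀`, which maps the signals at the eight
virtual sensors to the measurements: the sensing matrix is its product with the manifold matrix. -/
noncomputable def measurementII : Matrix (Fin 2 × Fin 4) (Fin 8) ℂ :=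
  (S₀ ⊗ₖ (1 : Matrix (Fin 4) (Fin 4) ℂ)) * UpsilonII

theorem measurementII_mulVec_zero (u : Fin 8 → ℂ) {m : Fin 4} {j k : Fin 8}
    (hj : drxII m = j) (hk : 2 + drxII m = k) : (measurementII *ᵥ u) (0, m) = u j + u k := by
  have h₀ : (UpsilonII *ᵥ u) (0, m) = u j := UpsilonII_mulVec_apply u (by simpa [dtx] using hj)
  have h₂ : (UpsilonII *ᵥ u) (2, m) = u k := UpsilonII_mulVec_apply u (by simpa [dtx] using hk)
  rw [measurementII, ← mulVec_mulVec, kronecker_one_mulVec_apply, Fin.sum_univ_three, h₀, h₂]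
  simp [S₀]

theorem measurementII_mulVec_one (u : Fin 8 → ℂ) {m : Fin 4} {k : Fin 8}
    (hk : 1 + drxII m = k) : (measurementII *ᵥ u) (1, m) = u k := by
  have h₁ : (UpsilonII *ᵥ u) (1, m) = u k := UpsilonII_mulVec_apply u (by simpa [dtx] using hk)
  rw [measurementII, ← mulVec_mulVec, kronecker_one_mulVec_apply, Fin.sum_univ_three, h₁]
  simp [S₀]

theorem measurementII_mulVec_injective : Function.Injective measurementII.mulVec := by
  refine (injective_iff_map_eq_zero measurementII.mulVecLin).mpr fun u hu => ?_
  have pair_sum {j k : Fin 8} (m : Fin 4) (hj : drxII m = j) (hk : 2 + drxII m = k) :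
      u j + u k = 0 :=
    (measurementII_mulVec_zero u hj hk).symm.trans (congrFun hu (0, m))
  have single {k : Fin 8} (m : Fin 4) (hk : 1 + drxII m = k) : u k = 0 :=
    (measurementII_mulVec_one u hk).symm.trans (congrFun hu (1, m))
  have h₁ : u 1 = 0 := single 0 rfl
  have h₂ : u 2 = 0 := single 1 rfl
  have h₄ : u 4 = 0 := single 2 rfl
  have h₆ : u 6 = 0 := single 3 rfl
  have h₀ : u 0 = 0 := by simpa [h₂] using pair_sum (j := 0) (k := 2) 0 rfl rfl
  have h₃ : u 3 = 0 := by simpa [h₁] using pair_sum (j := 1) (k := 3) 1 rfl rfl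
  have h₅ : u 5 = 0 := by simpa [h₃] using pair_sum (j := 3) (k := 5) 2 rfl rfl
  have h₇ : u 7 = 0 := by simpa [h₅] using pair_sum (j := 5) (k := 7) 3 rfl rfl
  ext ℓ
  fin_cases ℓ <;> assumption

end ArrayII

theorem stmt12_general {ι : Type*} [Fintype ι] {z : ι → ℂ} (hz : Function.Injective z)
    {A : Matrix (Fin 8) ι ℂ} (hA : ∀ ℓ i, A ℓ i = z i ^ (ℓ : ℕ)) {x y : ι → ℂ}
    (hxy : (Finset.univ.filter fun i => x i ≠ 0).card +
      (Finset.univ.filter fun i => y i ≠ 0).card ≤ 8)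
    (h : ((S₀ ⊗ₖ (1 : Matrix (Fin 4) (Fin 4) ℂ)) * UpsilonII * A) *ᵥ x =
          ((S₀ ⊗ₖ (1 : Matrix (Fin 4) (Fin 4) ℂ)) * UpsilonII * A) *ᵥ y) :
    x = y := by
  have manifold : A = (rectVandermonde z 1 8)ᵀ := by
    ext ℓ i
    simp [hA, rectVandermonde_apply]
  have manifold_rank : LeKruskalRank 8 A :=
    manifold ▸ leKruskalRank_transpose_rectVandermonde hz 8
  have sensing_rank : LeKruskalRank 8 (measurementII * A) :=
    manifold_rank.mul_of_mulVec_injective measurementII_mulVec_injective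
  exact sensing_rank.eq_of_mulVec_eq hxy h

theorem stmt12 (V : ℕ) (z : Fin V → ℂ) (hz : Function.Injective z)
    (A : Matrix (Fin 8) (Fin V) ℂ)
    (hA : ∀ (ℓ : Fin 8) (i : Fin V), A ℓ i = z i ^ (ℓ : ℕ))
    (x y : Fin V → ℂ)
    (hx : (Finset.univ.filter fun i => x i ≠ 0).card ≤ 4)
    (hy : (Finset.univ.filter fun i => y i ≠ 0).card ≤ 4)
    (h : ((S₀ ⊗ₖ (1 : Matrix (Fin 4) (Fin 4) ℂ)) * UpsilonII * A) *ᵥ x =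
          ((S₀ ⊗ₖ (1 : Matrix (Fin 4) (Fin 4) ℂ)) * UpsilonII * A) *ᵥ y) :
    x = y :=
  stmt12_general hz hA (add_le_add hx hy) h
end
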